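/- arXiv:2201.08026 — 8 statements merged into one kernel-verified Lean document; each statement's English description precedes it below -/
import Mathlib

section
/- Let V and W be real Hilbert spaces and a : V × W → ℝ a bounded bilinear form. Let A : V → W' be the bounded linear operator into the topological dual of W defined by (A v)(w) = a(v, w). Then A is bijective if and only if there exists β > 0 such that both inf-sup conditions hold: β‖v‖ ≤ sup{ a(v, w)/‖w‖ : w ∈ W, w ≠ 0 } for all v ∈ V, and β‖w‖ ≤ sup{ a(v, w)/‖v‖ : v ∈ V, v ≠ 0 } for all w ∈ W. -/
theorem bnb_sSup_eq_norm {E : Type*} [NormedAddCommGroup E] [NormedSpace ℝ E]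
    (f : E →L[ℝ] ℝ) : sSup {x : ℝ | ∃ w : E, w ≠ 0 ∧ x = f w / ‖w‖} = ‖f‖ := by
  have hub : ∀ x ∈ {x : ℝ | ∃ w : E, w ≠ 0 ∧ x = f w / ‖w‖}, x ≤ ‖f‖ := by
    rintro x ⟨w, hw, rfl⟩
    rw [div_le_iff₀ (norm_pos_iff.mpr hw)]
    exact (le_abs_self _).trans (f.le_opNorm w)
  have hle : ∀ w : E, w ≠ 0 →
      f w ≤ sSup {x : ℝ | ∃ w : E, w ≠ 0 ∧ x = f w / ‖w‖} * ‖w‖ := by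
    intro w hw
    rw [← div_le_iff₀ (norm_pos_iff.mpr hw)]
    exact le_csSup ⟨‖f‖, hub⟩ ⟨w, hw, rfl⟩
  have habs : ∀ w : E, w ≠ 0 →
      ‖f w‖ ≤ sSup {x : ℝ | ∃ w : E, w ≠ 0 ∧ x = f w / ‖w‖} * ‖w‖ := by
    intro w hw
    have h2 := hle (-w) (neg_ne_zero.mpr hw)
    rw [map_neg, norm_neg] at h2
    rw [Real.norm_eq_abs]
    exact abs_le'.mpr ⟨hle w hw, h2⟩
  refine le_antisymm (Real.sSup_le hub (norm_nonneg _)) ?_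
  refine f.opNorm_le_bound' ?_ ?_
  · by_cases h : ∃ w : E, w ≠ 0
    · obtain ⟨w, hw⟩ := h
      have h1 := (norm_nonneg _).trans (habs w hw)
      exact nonneg_of_mul_nonneg_left h1 (norm_pos_iff.mpr hw)
    · push Not at h
      have : {x : ℝ | ∃ w : E, w ≠ 0 ∧ x = f w / ‖w‖} = ∅ := by
        ext x
        simp only [Set.mem_setOf_eq, Set.mem_empty_iff_false, iff_false]
        rintro ⟨w, hw, -⟩
        exact hw (h w)
      rw [this, Real.sSup_empty]
  · intro w hw
    exact habs w (norm_ne_zero_iff.mp hw)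

/-- **Banach–Nečas–Babuška theorem** (Hilbert space version).
Let `a` be a bounded bilinear form on `V × W` and `A : V → W'` the induced bounded
linear operator into the dual, `(A v) w = a v w`.  Then `A` is bijective if and only if
there is `β > 0` such that both inf-sup conditions hold. -/
theorem banach_necas_babuska
    {V W : Type*} [NormedAddCommGroup V] [InnerProductSpace ℝ V] [CompleteSpace V]
    [NormedAddCommGroup W] [InnerProductSpace ℝ W] [CompleteSpace W]
    (a : V →ₗ[ℝ] W →ₗ[ℝ] ℝ) (M : ℝ) (hM : 0 ≤ M)
    (hbound : ∀ v w, |a v w| ≤ M * ‖v‖ * ‖w‖)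
    (A : V →L[ℝ] (W →L[ℝ] ℝ)) (hA : ∀ v w, A v w = a v w) :
    Function.Bijective A ↔
      ∃ β > (0 : ℝ),
        (∀ v : V, β * ‖v‖ ≤ sSup {x : ℝ | ∃ w : W, w ≠ 0 ∧ x = a v w / ‖w‖}) ∧
        (∀ w : W, β * ‖w‖ ≤ sSup {x : ℝ | ∃ v : V, v ≠ 0 ∧ x = a v w / ‖v‖}) := by
  have h1 : ∀ v, sSup {x : ℝ | ∃ w : W, w ≠ 0 ∧ x = a v w / ‖w‖} = ‖A v‖ := by
    intro v
    rw [← bnb_sSup_eq_norm (A v)]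
    simp only [hA]
  have h2 : ∀ w, sSup {x : ℝ | ∃ v : V, v ≠ 0 ∧ x = a v w / ‖v‖} = ‖A.flip w‖ := by
    intro w
    rw [← bnb_sSup_eq_norm (A.flip w)]
    simp only [ContinuousLinearMap.flip_apply, hA]
  simp only [h1, h2]
  constructor
  · intro hb
    let e := ContinuousLinearEquiv.ofBijective A
      (LinearMap.ker_eq_bot.mpr hb.1) (LinearMap.range_eq_top.mpr hb.2)
    have he : ∀ v, e v = A v := fun v => rfl
    let L : (W →L[ℝ] ℝ) →L[ℝ] V := e.symm
    have hK : 0 < ‖L‖ + 1 := by positivity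
    have hL : ∀ f, ‖e.symm f‖ ≤ (‖L‖ + 1) * ‖f‖ := by
      intro f
      have := L.le_opNorm f
      have h3 : L f = e.symm f := rfl
      rw [h3] at this
      nlinarith [norm_nonneg f]
    refine ⟨(‖L‖ + 1)⁻¹, inv_pos.mpr hK, ?_, ?_⟩
    · intro v
      rw [inv_mul_le_iff₀ hK]
      have := hL (A v)
      rwa [← he, e.symm_apply_apply] at this
    · intro w
      rw [inv_mul_le_iff₀ hK]
      rcases eq_or_ne w 0 with rfl | hw
      · simp
      have hw' := norm_pos_iff.mpr hw
      let f : W →L[ℝ] ℝ := InnerProductSpace.toDual ℝ W w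
      have hfn : ‖f‖ = ‖w‖ := (InnerProductSpace.toDual ℝ W).norm_map w
      have hfw : f w = ‖w‖ * ‖w‖ := by
        simp only [f, InnerProductSpace.toDual_apply_apply]
        exact real_inner_self_eq_norm_mul_norm w
      have hAf : A.flip w (e.symm f) = ‖w‖ * ‖w‖ := by
        rw [ContinuousLinearMap.flip_apply, ← he, e.apply_symm_apply, hfw]
      have h4 : ‖w‖ * ‖w‖ ≤ ‖A.flip w‖ * ‖e.symm f‖ := by
        rw [← hAf]
        exact (le_abs_self _).trans ((A.flip w).le_opNorm _)
      have h5 := hL f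
      rw [hfn] at h5
      have h6 : ‖A.flip w‖ * ‖e.symm f‖ ≤ ‖A.flip w‖ * ((‖L‖ + 1) * ‖w‖) := by gcongr
      refine le_of_mul_le_mul_right ?_ hw'
      linarith
  · rintro ⟨β, hβ, hv, hw⟩
    have hanti : AntilipschitzWith (β⁻¹).toNNReal A := by
      refine ContinuousLinearMap.antilipschitz_of_bound A ?_
      intro v
      rw [Real.coe_toNNReal _ (inv_pos.mpr hβ).le, le_inv_mul_iff₀ hβ]
      exact hv v
    refine ⟨hanti.injective, ?_⟩
    have hcl : IsClosed (Set.range A) := hanti.isClosed_range A.uniformContinuous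
    let D := InnerProductSpace.toDual ℝ W
    let K : Submodule ℝ W := (LinearMap.range A.toLinearMap).comap D.toLinearEquiv.toLinearMap
    have hKmem : ∀ x, x ∈ K ↔ D x ∈ Set.range A := fun x => Iff.rfl
    have hKcl : IsClosed (K : Set W) := hcl.preimage D.continuous
    have := hKcl.completeSpace_coe
    have hKo : Kᗮ = ⊥ := by
      rw [Submodule.eq_bot_iff]
      intro w hwK
      have hz : A.flip w = 0 := by
        ext v
        have hx : D.symm (A v) ∈ K := by
          rw [hKmem, D.apply_symm_apply]
          exact ⟨v, rfl⟩
        have := (Submodule.mem_orthogonal K w).mp hwK _ hx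
        rw [InnerProductSpace.toDual_symm_apply] at this
        simpa using this
      have := hw w
      rw [hz, norm_zero] at this
      exact norm_le_zero_iff.mp (nonpos_of_mul_nonpos_right this hβ)
    have hKt : K = ⊤ := Submodule.orthogonal_eq_bot_iff.mp hKo
    intro f
    have : D.symm f ∈ K := hKt ▸ Submodule.mem_top
    rw [hKmem, D.apply_symm_apply] at this
    exact this
end

section
/- Let V and W be nontrivial real Hilbert spaces and a : V × W → ℝ a bounded bilinear form. Define β₁ = inf over nonzero v ∈ V of sup over nonzero w ∈ W of a(v, w)/(‖v‖‖w‖), and β₂ = inf over nonzero w ∈ W of sup over nonzero v ∈ V of a(v, w)/(‖v‖‖w‖). If β₁ > 0 and β₂ > 0, then β₁ = β₂. -/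
theorem inf_sup_aux
    {V W : Type*} [NormedAddCommGroup V] [InnerProductSpace ℝ V] [CompleteSpace V]
    [NormedAddCommGroup W] [InnerProductSpace ℝ W] [CompleteSpace W]
    (hW : ∃ w : W, w ≠ 0)
    (a : V →ₗ[ℝ] W →ₗ[ℝ] ℝ) (M : ℝ)
    (hbound : ∀ v w, |a v w| ≤ M * ‖v‖ * ‖w‖)
    (β₁ β₂ : ℝ)
    (hβ₁ : β₁ = sInf {x : ℝ | ∃ v : V, v ≠ 0 ∧
      x = sSup {y : ℝ | ∃ w : W, w ≠ 0 ∧ y = a v w / (‖v‖ * ‖w‖)}})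
    (hβ₂ : β₂ = sInf {x : ℝ | ∃ w : W, w ≠ 0 ∧
      x = sSup {y : ℝ | ∃ v : V, v ≠ 0 ∧ y = a v w / (‖v‖ * ‖w‖)}})
    (h₁ : 0 < β₁) (h₂ : 0 < β₂) :
    β₁ ≤ β₂ := by
  have le_of_sInf : ∀ (S : Set ℝ) (b : ℝ), b = sInf S → 0 < b → ∀ x ∈ S, b ≤ x := by
    intro S b hb hpos x hx
    have hbd : BddBelow S := by
      by_contra hn
      rw [Real.sInf_of_not_bddBelow hn] at hb
      linarith
    rw [hb]
    exact csInf_le hbd hx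
  let B : V →L[ℝ] W →L[ℝ] ℝ := a.mkContinuous₂ M (by simpa using hbound)
  have hB : ∀ v w, B v w = a v w := fun v w => rfl
  let L : V →ₗ[ℝ] W :=
    { toFun := fun v => (InnerProductSpace.toDual ℝ W).symm (B v)
      map_add' := by intro x y; simp
      map_smul' := by intro c x; simp }
  have hL : ∀ v w, inner ℝ (L v) w = a v w := by
    intro v w
    rw [← hB]
    exact InnerProductSpace.toDual_symm_apply
  let A : V →L[ℝ] W := L.mkContinuous ‖B‖ (by
    intro v
    change ‖(InnerProductSpace.toDual ℝ W).symm (B v)‖ ≤ _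
    rw [LinearIsometryEquiv.norm_map]
    exact B.le_opNorm v)
  have hA : ∀ v w, inner ℝ (A v) w = a v w := hL
  have hlow : ∀ v, β₁ * ‖v‖ ≤ ‖A v‖ := by
    intro v
    by_cases hv : v = 0
    · simp [hv]
    have hvp : 0 < ‖v‖ := norm_pos_iff.2 hv
    have h := le_of_sInf _ _ hβ₁ h₁ _ ⟨v, hv, rfl⟩
    rw [← le_div_iff₀ hvp]
    refine h.trans (Real.sSup_le ?_ (by positivity))
    rintro y ⟨w, hw, rfl⟩
    have hwp : 0 < ‖w‖ := norm_pos_iff.2 hw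
    rw [div_le_div_iff₀ (by positivity) hvp, ← hA]
    have := real_inner_le_norm (A v) w
    nlinarith
  have hanti : AntilipschitzWith (Real.toNNReal β₁⁻¹) A := by
    refine A.antilipschitz_of_bound (fun v => ?_)
    rw [Real.coe_toNNReal _ (by positivity), inv_mul_eq_div, le_div_iff₀ h₁, mul_comm]
    exact hlow v
  have hclosed : IsClosed (A.range : Set W) := by
    have h : IsClosed (Set.range A) := hanti.isClosed_range A.uniformContinuous
    exact h
  have hsurj : A.range = ⊤ := by
    haveI : CompleteSpace A.range := hclosed.completeSpace_coe
    rw [← Submodule.orthogonal_eq_bot_iff, Submodule.eq_bot_iff]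
    intro w hw
    by_contra hw0
    have h := le_of_sInf _ _ hβ₂ h₂ _ ⟨w, hw0, rfl⟩
    have : sSup {y : ℝ | ∃ v : V, v ≠ 0 ∧ y = a v w / (‖v‖ * ‖w‖)} ≤ 0 := by
      refine Real.sSup_le ?_ le_rfl
      rintro y ⟨v, hv, rfl⟩
      have h0 : inner ℝ (A v) w = 0 := hw (A v) ⟨v, rfl⟩
      rw [← hA, h0]
      simp
    linarith
  rw [hβ₂]
  obtain ⟨w₀, hw₀⟩ := hW
  refine le_csInf ⟨_, w₀, hw₀, rfl⟩ ?_
  rintro x ⟨w, hw, rfl⟩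
  obtain ⟨v, hv⟩ : w ∈ A.range := hsurj ▸ Submodule.mem_top
  have hv : A v = w := hv
  have hv0 : v ≠ 0 := by
    rintro rfl
    exact hw (by simpa using hv.symm)
  have hwp : 0 < ‖w‖ := norm_pos_iff.2 hw
  have hvp : 0 < ‖v‖ := norm_pos_iff.2 hv0
  have hbdd : BddAbove {y : ℝ | ∃ v : V, v ≠ 0 ∧ y = a v w / (‖v‖ * ‖w‖)} := by
    refine ⟨M, ?_⟩
    rintro y ⟨u, hu, rfl⟩
    have hup : 0 < ‖u‖ := norm_pos_iff.2 hu
    rw [div_le_iff₀ (by positivity), ← mul_assoc]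
    exact (le_abs_self _).trans (hbound u w)
  refine le_trans ?_ (le_csSup hbdd ⟨v, hv0, rfl⟩)
  rw [← hA, hv, real_inner_self_eq_norm_sq, le_div_iff₀ (by positivity)]
  have := hlow v
  rw [hv] at this
  nlinarith

/-- For a bounded bilinear form `a` on nontrivial real Hilbert spaces `V × W`, if the
two inf-sup constants
`β₁ = inf_{v ≠ 0} sup_{w ≠ 0} a(v,w)/(‖v‖‖w‖)` and
`β₂ = inf_{w ≠ 0} sup_{v ≠ 0} a(v,w)/(‖v‖‖w‖)`
are both positive, then they are equal. -/
theorem inf_sup_constants_eq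
    {V W : Type*} [NormedAddCommGroup V] [InnerProductSpace ℝ V] [CompleteSpace V]
    [NormedAddCommGroup W] [InnerProductSpace ℝ W] [CompleteSpace W]
    (hV : ∃ v : V, v ≠ 0) (hW : ∃ w : W, w ≠ 0)
    (a : V →ₗ[ℝ] W →ₗ[ℝ] ℝ) (M : ℝ) (hM : 0 ≤ M)
    (hbound : ∀ v w, |a v w| ≤ M * ‖v‖ * ‖w‖)
    (β₁ β₂ : ℝ)
    (hβ₁ : β₁ = sInf {x : ℝ | ∃ v : V, v ≠ 0 ∧
      x = sSup {y : ℝ | ∃ w : W, w ≠ 0 ∧ y = a v w / (‖v‖ * ‖w‖)}})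
    (hβ₂ : β₂ = sInf {x : ℝ | ∃ w : W, w ≠ 0 ∧
      x = sSup {y : ℝ | ∃ v : V, v ≠ 0 ∧ y = a v w / (‖v‖ * ‖w‖)}})
    (h₁ : 0 < β₁) (h₂ : 0 < β₂) :
    β₁ = β₂ := by
  apply le_antisymm
  · exact inf_sup_aux hW a M hbound β₁ β₂ hβ₁ hβ₂ h₁ h₂
  · refine inf_sup_aux hV a.flip M ?_ β₂ β₁ ?_ ?_ h₂ h₁
    · intro w v
      rw [LinearMap.flip_apply]
      calc |a v w| ≤ M * ‖v‖ * ‖w‖ := hbound v w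
        _ = M * ‖w‖ * ‖v‖ := by ring
    · simp only [LinearMap.flip_apply]
      rw [hβ₂]
      simp only [mul_comm]
    · simp only [LinearMap.flip_apply]
      rw [hβ₁]
      simp only [mul_comm]
end

section
/- Let V be a real Hilbert space and a : V × V → ℝ a bounded bilinear form. Suppose there is β > 0 such that for every v ∈ V both β‖v‖ ≤ sup{ a(v, w)/‖w‖ : w ∈ V, w ≠ 0 } and β‖v‖ ≤ sup{ a(w, v)/‖w‖ : w ∈ V, w ≠ 0 } hold. Then for every continuous linear functional g on V there exists a unique u ∈ V with a(u, v) = g(v) for all v ∈ V, and this solution satisfies ‖u‖ ≤ β⁻¹‖g‖, where ‖g‖ is the dual norm of g. -/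
/-- If a bounded bilinear form `a` on a real Hilbert space `V` satisfies the two
inf-sup conditions with constant `β > 0`, then for every continuous linear functional
`g` on `V` there is a unique `u ∈ V` with `a(u, v) = g(v)` for all `v`, and any such
solution satisfies the stability bound `‖u‖ ≤ β⁻¹ ‖g‖`. -/
theorem infSup_wellPosed
    {V : Type*} [NormedAddCommGroup V] [InnerProductSpace ℝ V] [CompleteSpace V]
    (a : V →ₗ[ℝ] V →ₗ[ℝ] ℝ) (M : ℝ) (hM : 0 ≤ M)
    (hbound : ∀ v w, |a v w| ≤ M * ‖v‖ * ‖w‖)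
    (β : ℝ) (hβ : 0 < β)
    (hinfsup₁ : ∀ v : V, β * ‖v‖ ≤ sSup {x : ℝ | ∃ w : V, w ≠ 0 ∧ x = a v w / ‖w‖})
    (hinfsup₂ : ∀ v : V, β * ‖v‖ ≤ sSup {x : ℝ | ∃ w : V, w ≠ 0 ∧ x = a w v / ‖w‖}) :
    ∀ g : V →L[ℝ] ℝ,
      (∃! u : V, ∀ v : V, a u v = g v) ∧
      (∀ u : V, (∀ v : V, a u v = g v) → ‖u‖ ≤ β⁻¹ * ‖g‖) := by
  intro g
  have key : ∀ (u : V) (C : ℝ), 0 ≤ C → (∀ v, a u v ≤ C * ‖v‖) → β * ‖u‖ ≤ C := by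
    intro u C hC h
    refine (hinfsup₁ u).trans (Real.sSup_le ?_ hC)
    rintro x ⟨w, hw, rfl⟩
    exact (div_le_iff₀ (norm_pos_iff.mpr hw)).mpr (h w)
  have stab : ∀ (g : V →L[ℝ] ℝ) (u : V), (∀ v, a u v = g v) → β * ‖u‖ ≤ ‖g‖ := by
    intro g u h
    refine key u _ (norm_nonneg _) fun v => ?_
    rw [h v]
    exact (le_abs_self _).trans (g.le_opNorm v)
  let B : V →L[ℝ] V →L[ℝ] ℝ := a.mkContinuous₂ M (by simpa [Real.norm_eq_abs] using hbound)
  have hB : ∀ v w, B v w = a v w := fun v w => rfl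
  let T : V →L[ℝ] V := InnerProductSpace.continuousLinearMapOfBilin (𝕜 := ℝ) B
  have hT : ∀ v w, inner ℝ (T v) w = a v w := fun v w => by
    rw [← hB]; exact InnerProductSpace.continuousLinearMapOfBilin_apply B v w
  have hbelow : ∀ v, β * ‖v‖ ≤ ‖T v‖ := fun v =>
    key v _ (norm_nonneg _) fun w => by
      rw [← hT]; exact real_inner_le_norm _ _
  have hanti : AntilipschitzWith (β⁻¹).toNNReal T := by
    refine ContinuousLinearMap.antilipschitz_of_bound T fun x => ?_
    rw [Real.coe_toNNReal _ (inv_nonneg.mpr hβ.le), inv_mul_eq_div, le_div_iff₀ hβ, mul_comm]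
    exact hbelow x
  have hclosed : IsClosed (T.range : Set V) :=
    hanti.isClosed_range T.uniformContinuous
  have htop : T.range = ⊤ := by
    haveI := hclosed.completeSpace_coe
    rw [← T.range.orthogonal_orthogonal, Submodule.eq_top_iff']
    intro v w hw
    have h0 : ∀ x, a x w = 0 := fun x => by
      rw [← hT]; exact hw _ ⟨x, rfl⟩
    have h1 : β * ‖w‖ ≤ 0 := by
      refine (hinfsup₂ w).trans (Real.sSup_le ?_ le_rfl)
      rintro x ⟨y, hy, rfl⟩
      simp [h0]
    have h2 : ‖w‖ ≤ 0 := by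
      by_contra h
      push Not at h
      nlinarith [mul_pos hβ h]
    rw [norm_le_zero_iff.mp h2, inner_zero_left]
  refine ⟨?_, fun u hu => ?_⟩
  · have hmem : (InnerProductSpace.toDual ℝ V).symm g ∈ T.range := by rw [htop]; trivial
    obtain ⟨u, hu⟩ := hmem
    have hu' : T u = (InnerProductSpace.toDual ℝ V).symm g := hu
    have hsol : ∀ v, a u v = g v := fun v => by
      rw [← hT, hu', InnerProductSpace.toDual_symm_apply]
    refine ⟨u, hsol, fun y hy => ?_⟩
    apply hanti.injective
    refine ext_inner_right ℝ fun v => ?_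
    rw [hT, hT, hsol, hy]
  · rw [inv_mul_eq_div, le_div_iff₀ hβ, mul_comm]
    exact stab g u hu
end

section
/- Let H be a real Hilbert space, let C : H →L H be a continuous linear operator that is coercive, i.e., there is α > 0 with ⟨C v, v⟩ ≥ α‖v‖² for all v ∈ H, and let K : H →L H be a compact operator. Set B = C + K and let B† denote the Hilbert-space adjoint of B. Then the following six statements are equivalent: (1) B is injective; (2) there exists c > 0 such that ‖v‖ ≤ c‖B v‖ for all v ∈ H; (3) B is bijective; (4) B† is injective; (5) there exists c > 0 such that ‖v‖ ≤ c‖B† v‖ for all v ∈ H; (6) B† is bijective. -/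
open RealInnerProductSpace

theorem isCompactOperator_adjoint_aux
    {H : Type*} [NormedAddCommGroup H] [InnerProductSpace ℝ H] [CompleteSpace H]
    (K : H →L[ℝ] H) (hK : IsCompactOperator K) :
    IsCompactOperator (ContinuousLinearMap.adjoint K) := by
  set A := ContinuousLinearMap.adjoint K with hA
  have hKA : IsCompactOperator (K ∘L A) := hK.comp_clm A
  have key : ∀ x : H, ‖A x‖ ^ 2 ≤ ‖(K ∘L A) x‖ * ‖x‖ := by
    intro x
    have h1 : ⟪A x, A x⟫ = ⟪(K ∘L A) x, x⟫ := by
      conv_lhs => rw [hA, ContinuousLinearMap.adjoint_inner_right]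
      rfl
    rw [← real_inner_self_eq_norm_sq, h1]
    exact real_inner_le_norm _ _
  have htb : TotallyBounded ((K ∘L A) '' Metric.closedBall 0 1) :=
    (hKA.isCompact_closure_image_closedBall (𝕜₁ := ℝ) (𝕜₂ := ℝ) 1).totallyBounded.subset subset_closure
  have htb' : TotallyBounded (A '' Metric.closedBall 0 1) := by
    rw [Metric.totallyBounded_iff]
    intro ε hε
    obtain ⟨u, hu, huf, hcov⟩ := Set.exists_subset_image_finite_and.1
      (totallyBounded_iff_subset.1 htb _
        (Metric.dist_mem_uniformity (show 0 < ε ^ 2 / 2 by positivity)))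
    refine ⟨A '' u, huf.image _, ?_⟩
    rintro _ ⟨x, hx, rfl⟩
    have := hcov (Set.mem_image_of_mem _ hx)
    simp only [Set.mem_iUnion, Set.mem_setOf_eq, exists_prop, Set.exists_mem_image] at this ⊢
    obtain ⟨y, hy, hxy⟩ := this
    refine ⟨y, hy, ?_⟩
    have hy' := hu hy
    rw [mem_closedBall_zero_iff] at hx hy'
    rw [dist_eq_norm, ← map_sub] at hxy
    rw [Metric.mem_ball, dist_eq_norm, ← map_sub]
    have h2 : ‖x - y‖ ≤ 2 := (norm_sub_le _ _).trans (by linarith)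
    refine lt_of_pow_lt_pow_left₀ 2 hε.le ?_
    have := key (x - y)
    nlinarith [norm_nonneg ((K ∘L A) (x - y))]
  refine (isCompactOperator_iff_isCompact_closure_image_closedBall (A : H →ₗ[ℝ] H) one_pos).2 ?_
  exact htb'.closure.isCompact_of_isClosed isClosed_closure

theorem isUnit_of_coercive_add_compact_aux
    {H : Type*} [NormedAddCommGroup H] [InnerProductSpace ℝ H] [CompleteSpace H]
    (C K : H →L[ℝ] H)
    (α : ℝ) (hα : 0 < α) (hcoer : ∀ v : H, α * ‖v‖ ^ 2 ≤ ⟪C v, v⟫)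
    (hK : IsCompactOperator K) (hinj : Function.Injective (C + K)) : IsUnit (C + K) := by
  have hco : IsCoercive ((innerSL ℝ).comp C) :=
    ⟨α, hα, fun u => by simpa [mul_assoc, sq] using hcoer u⟩
  set e := hco.continuousLinearEquivOfBilin with he
  have heC : ∀ v, e v = C v := fun v => by
    refine ext_inner_right ℝ fun w => ?_
    rw [he, hco.continuousLinearEquivOfBilin_apply]; rfl
  have hT : IsCompactOperator ((e.symm : H →L[ℝ] H) ∘L K) :=
    hK.clm_comp (e.symm : H →L[ℝ] H)
  have hfac : C + K = (e : H →L[ℝ] H) * (1 + (e.symm : H →L[ℝ] H) ∘L K) := by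
    ext v; simp [← heC]
  have heu : IsUnit (e : H →L[ℝ] H) := ⟨ContinuousLinearEquiv.toUnit e, rfl⟩
  rcases hT.hasEigenvalue_or_mem_resolventSet (μ := (-1 : ℝ)) (by norm_num) with h | h
  · exfalso
    obtain ⟨v, hv⟩ := h.exists_hasEigenvector
    refine hv.2 (hinj ?_)
    have h1 : e.symm (K v) = -v := by simpa using hv.apply_eq_smul
    rw [hfac]
    simp [h1]
  · rw [spectrum.mem_resolventSet_iff] at h
    rw [hfac]
    refine heu.mul ?_
    have := h.neg
    convert this using 1
    simp [add_comm]



/-- **Fredholm alternative, operator form.**  Let `B = C + K` where `C` is a coercive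
continuous linear operator on a real Hilbert space `H` and `K` is a compact operator.
Then injectivity, boundedness below, and bijectivity of `B`, as well as of its
Hilbert-space adjoint `B†`, are all equivalent. -/
theorem fredholm_tfae
    {H : Type*} [NormedAddCommGroup H] [InnerProductSpace ℝ H] [CompleteSpace H]
    (C K : H →L[ℝ] H)
    (α : ℝ) (hα : 0 < α) (hcoer : ∀ v : H, α * ‖v‖ ^ 2 ≤ ⟪C v, v⟫)
    (hK : IsCompactOperator K) (B : H →L[ℝ] H) (hB : B = C + K) :
    List.TFAE
      [ Function.Injective B,
        ∃ c > (0 : ℝ), ∀ v : H, ‖v‖ ≤ c * ‖B v‖,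
        Function.Bijective B,
        Function.Injective (ContinuousLinearMap.adjoint B),
        ∃ c > (0 : ℝ), ∀ v : H, ‖v‖ ≤ c * ‖ContinuousLinearMap.adjoint B v‖,
        Function.Bijective (ContinuousLinearMap.adjoint B) ] := by
  have hcoer' : ∀ v : H, α * ‖v‖ ^ 2 ≤ ⟪ContinuousLinearMap.adjoint C v, v⟫ := fun v => by
    rw [ContinuousLinearMap.adjoint_inner_left, real_inner_comm]; exact hcoer v
  have hB' : ContinuousLinearMap.adjoint B
      = ContinuousLinearMap.adjoint C + ContinuousLinearMap.adjoint K := by rw [hB, map_add]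
  have u1 : Function.Injective B → IsUnit B := fun h => by
    subst hB; exact isUnit_of_coercive_add_compact_aux C K α hα hcoer hK h
  have u2 : Function.Injective (ContinuousLinearMap.adjoint B) →
      IsUnit (ContinuousLinearMap.adjoint B) := fun h => by
    rw [hB'] at h ⊢
    exact isUnit_of_coercive_add_compact_aux _ _ α hα hcoer' (isCompactOperator_adjoint_aux K hK) h
  have hstar : IsUnit (ContinuousLinearMap.adjoint B) ↔ IsUnit B := by
    rw [← ContinuousLinearMap.star_eq_adjoint]; exact isUnit_star
  have bij : ∀ A : H →L[ℝ] H, IsUnit A → Function.Bijective A := fun A h =>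
    ContinuousLinearMap.isUnit_iff_bijective.1 h
  have bdd : ∀ A : H →L[ℝ] H, IsUnit A → ∃ c > (0 : ℝ), ∀ v : H, ‖v‖ ≤ c * ‖A v‖ := by
    rintro _ ⟨u, rfl⟩
    refine ⟨‖(↑u⁻¹ : H →L[ℝ] H)‖ + 1, by positivity, fun v => ?_⟩
    have h1 : (↑u⁻¹ : H →L[ℝ] H) ((u : H →L[ℝ] H) v) = v := by
      rw [← mul_apply_eq_comp, Units.inv_mul]; rfl
    have h2 := (↑u⁻¹ : H →L[ℝ] H).le_opNorm ((u : H →L[ℝ] H) v)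
    rw [h1] at h2
    nlinarith [norm_nonneg ((u : H →L[ℝ] H) v)]
  have inj : ∀ A : H →L[ℝ] H, (∃ c > (0 : ℝ), ∀ v : H, ‖v‖ ≤ c * ‖A v‖) →
      Function.Injective A := by
    rintro A ⟨c, -, h⟩
    rw [injective_iff_map_eq_zero]
    intro v hv
    simpa [hv] using h v
  tfae_have 1 → 2 := fun h => bdd _ (u1 h)
  tfae_have 2 → 3 := fun h => bij _ (u1 (inj _ h))
  tfae_have 3 → 4 := fun h => (bij _ (hstar.2 (u1 h.1))).1
  tfae_have 4 → 5 := fun h => bdd _ (u2 h)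
  tfae_have 5 → 6 := fun h => bij _ (u2 (inj _ h))
  tfae_have 6 → 1 := fun h => (bij _ (hstar.1 (u2 h.1))).1
  tfae_finish
end

section
/- Let H be a real Hilbert space, let C : H →L H be a continuous linear operator that is coercive, i.e., there is α > 0 with ⟨C v, v⟩ ≥ α‖v‖² for all v ∈ H, and let K : H →L H be a compact operator. Set B = C + K. If B is injective, then B is surjective. -/
open RealInnerProductSpace

/-- **Fredholm alternative (existence from uniqueness).**  Let `B = C + K` where `C`
is a coercive continuous linear operator on a real Hilbert space `H` and `K` is a
compact operator.  If `B` is injective, then `B` is surjective. -/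
theorem fredholm_injective_surjective
    {H : Type*} [NormedAddCommGroup H] [InnerProductSpace ℝ H] [CompleteSpace H]
    (C K : H →L[ℝ] H)
    (α : ℝ) (hα : 0 < α) (hcoer : ∀ v : H, α * ‖v‖ ^ 2 ≤ ⟪C v, v⟫)
    (hK : IsCompactOperator K) (B : H →L[ℝ] H) (hB : B = C + K)
    (hinj : Function.Injective B) :
    Function.Surjective B := by
  have hc : IsCoercive ((innerSL ℝ).comp C : H →L[ℝ] H →L[ℝ] ℝ) := by
    refine ⟨α, hα, fun v => ?_⟩
    have h := hcoer v
    rw [pow_two, ← mul_assoc] at h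
    exact h
  let E := hc.continuousLinearEquivOfBilin
  have hE : ∀ v, E v = C v := fun v =>
    (hc.unique_continuousLinearEquivOfBilin (v := v) (f := C v) (fun w => rfl)).symm
  let T : H →L[ℝ] H := (E.symm : H →L[ℝ] H).comp K
  have hT : IsCompactOperator T := hK.clm_comp (E.symm : H →L[ℝ] H)
  have hBT : ∀ v, B v = E (v + T v) := by
    intro v
    simp [hB, T, hE v, map_add]
  rcases hT.hasEigenvalue_or_mem_resolventSet (μ := (-1 : ℝ)) (by norm_num) with h | h
  · exfalso
    obtain ⟨v, hv⟩ := h.exists_hasEigenvector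
    have h1 : T v = (-1 : ℝ) • v := hv.apply_eq_smul
    apply hv.2
    apply hinj
    rw [hBT, h1]
    simp
  · intro y
    rw [spectrum.mem_resolventSet_iff] at h
    obtain ⟨S, hS⟩ := h.exists_right_inv
    have h2 := congrArg (fun A : H →L[ℝ] H => A (E.symm y)) hS
    simp [Algebra.algebraMap_eq_smul_one] at h2
    refine ⟨-S (E.symm y), ?_⟩
    rw [hBT, ← E.apply_symm_apply y, ← h2]
    congr 1
    simp [h2]
    simpa [sub_eq_add_neg] using h2
end

section
/- Let H be a real Hilbert space, let C : H →L H be a continuous linear operator that is coercive, i.e., there is α > 0 with ⟨C v, v⟩ ≥ α‖v‖² for all v ∈ H, and let K : H →L H be a compact operator. Set B = C + K. If B is injective, then B is bounded below: there exists β > 0 such that β‖v‖ ≤ ‖B v‖ for all v ∈ H. -/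
open RealInnerProductSpace

/-- **A priori stability bound.**  Let `B = C + K` where `C` is a coercive continuous
linear operator on a real Hilbert space `H` and `K` is a compact operator.  If `B` is
injective, then `B` is bounded below: there exists `β > 0` with `β‖v‖ ≤ ‖B v‖` for
all `v`. -/
theorem fredholm_injective_boundedBelow
    {H : Type*} [NormedAddCommGroup H] [InnerProductSpace ℝ H] [CompleteSpace H]
    (C K : H →L[ℝ] H)
    (α : ℝ) (hα : 0 < α) (hcoer : ∀ v : H, α * ‖v‖ ^ 2 ≤ ⟪C v, v⟫)
    (hK : IsCompactOperator K) (B : H →L[ℝ] H) (hB : B = C + K)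
    (hinj : Function.Injective B) :
    ∃ β > (0 : ℝ), ∀ v : H, β * ‖v‖ ≤ ‖B v‖ := by
  have hC : ∀ v : H, α * ‖v‖ ≤ ‖C v‖ := by
    intro v
    rcases eq_or_ne v 0 with rfl | hv
    · simp
    · have h1 := (hcoer v).trans (real_inner_le_norm (C v) v)
      have h2 : 0 < ‖v‖ := norm_pos_iff.mpr hv
      refine le_of_mul_le_mul_right ?_ h2
      nlinarith
  have hanti : AntilipschitzWith (Real.toNNReal α⁻¹) C := by
    refine C.antilipschitz_of_bound fun v => ?_
    rw [Real.coe_toNNReal _ (inv_nonneg.mpr hα.le), inv_mul_eq_div, le_div_iff₀ hα, mul_comm]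
    exact hC v
  have hemb := hanti.isClosedEmbedding C.uniformContinuous
  by_contra! hcon
  have hseq : ∀ n : ℕ, ∃ v : H, ‖v‖ = 1 ∧ ‖B v‖ ≤ 1 / ((n : ℝ) + 1) := by
    intro n
    obtain ⟨v, hv⟩ := hcon (1 / ((n : ℝ) + 1)) (by positivity)
    have hv0 : v ≠ 0 := by
      rintro rfl
      simp at hv
    have h2 : 0 < ‖v‖ := norm_pos_iff.mpr hv0
    refine ⟨‖v‖⁻¹ • v, ?_, ?_⟩
    · rw [norm_smul, norm_inv, norm_norm, inv_mul_cancel₀ h2.ne']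
    · rw [map_smul, norm_smul, norm_inv, norm_norm, inv_mul_eq_div, div_le_iff₀ h2]
      exact hv.le
  choose v hv1 hvB using hseq
  obtain ⟨S, hS, hKS⟩ := hK.image_closedBall_subset_compact (f := (K : H →ₗ[ℝ] H)) 1
  obtain ⟨w, -, φ, hφ, hw⟩ := hS.tendsto_subseq (x := fun n => K (v n)) fun n =>
    hKS ⟨v n, by simp [hv1 n], rfl⟩
  have hB0 : Filter.Tendsto (fun n => B (v n)) Filter.atTop (nhds 0) :=
    squeeze_zero_norm hvB tendsto_one_div_add_atTop_nhds_zero_nat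
  have hBφ := hB0.comp hφ.tendsto_atTop
  have hCφ : Filter.Tendsto (fun n => C (v (φ n))) Filter.atTop (nhds (0 - w)) := by
    refine (hBφ.sub hw).congr fun n => ?_
    simp [hB]
  obtain ⟨v0, hv0⟩ : 0 - w ∈ Set.range C :=
    hemb.isClosed_range.mem_of_tendsto hCφ (Filter.Eventually.of_forall fun n => ⟨_, rfl⟩)
  rw [← hv0] at hCφ
  have hvφ : Filter.Tendsto (fun n => v (φ n)) Filter.atTop (nhds v0) :=
    hemb.isInducing.tendsto_nhds_iff.mpr hCφ
  have hBv0 : B v0 = 0 :=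
    tendsto_nhds_unique ((B.continuous.tendsto v0).comp hvφ) hBφ
  have hz : v0 = 0 := hinj (by rw [hBv0, map_zero])
  have hn : ‖v0‖ = 1 := tendsto_nhds_unique hvφ.norm (by simp [hv1])
  simp [hz] at hn
end

section
/- Let H be a real Hilbert space and let a : H × H → ℝ be a bilinear form of the form a(u, v) = c(u, v) + ⟨K u, v⟩, where c is a bounded bilinear form that is coercive (there are M ≥ 0 and α > 0 with |c(u, v)| ≤ M‖u‖‖v‖ and c(v, v) ≥ α‖v‖² for all u, v ∈ H) and K : H →L H is a compact operator. Then the homogeneous problem has only the zero solution (i.e., a(u, v) = 0 for all v ∈ H implies u = 0) if and only if for every continuous linear functional g on H there exists a unique u ∈ H with a(u, v) = g(v) for all v ∈ H. -/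
open RealInnerProductSpace

/-- **Uniqueness implies well-posedness** for bilinear forms of Fredholm type.
Let `a(u,v) = c(u,v) + ⟪K u, v⟫` on a real Hilbert space `H`, where `c` is a bounded
coercive bilinear form and `K` is a compact operator.  Then the homogeneous problem
has only the zero solution iff for every continuous linear functional `g` there is a
unique `u` with `a(u,v) = g(v)` for all `v`. -/
theorem uniqueness_iff_wellPosed
    {H : Type*} [NormedAddCommGroup H] [InnerProductSpace ℝ H] [CompleteSpace H]
    (a : H → H → ℝ) (c : H →ₗ[ℝ] H →ₗ[ℝ] ℝ) (K : H →L[ℝ] H)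
    (M : ℝ) (hM : 0 ≤ M) (hcbound : ∀ u v : H, |c u v| ≤ M * ‖u‖ * ‖v‖)
    (α : ℝ) (hα : 0 < α) (hccoer : ∀ v : H, α * ‖v‖ ^ 2 ≤ c v v)
    (hK : IsCompactOperator K)
    (ha : ∀ u v : H, a u v = c u v + ⟪K u, v⟫) :
    (∀ u : H, (∀ v : H, a u v = 0) → u = 0) ↔
      (∀ g : H →L[ℝ] ℝ, ∃! u : H, ∀ v : H, a u v = g v) := by
  set B : H →L[ℝ] H →L[ℝ] ℝ := LinearMap.mkContinuous₂ c M hcbound with hB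
  have hBc : ∀ u v, B u v = c u v := fun u v => rfl
  have hco : IsCoercive B := ⟨α, hα, fun v => by rw [hBc, mul_assoc, ← sq]; exact hccoer v⟩
  set C := hco.continuousLinearEquivOfBilin with hC
  have hCa : ∀ u v, ⟪C u, v⟫ = c u v := fun u v => hco.continuousLinearEquivOfBilin_apply u v
  have haC : ∀ u v, a u v = ⟪C u + K u, v⟫ := fun u v => by
    rw [ha, inner_add_left, hCa]
  constructor
  · intro h
    set T : H →L[ℝ] H := (C.symm : H →L[ℝ] H) ∘L K with hT
    have hTc : IsCompactOperator T := hK.clm_comp (C.symm : H →L[ℝ] H)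
    have hCT : ∀ u, C (T u) = K u := fun u => by simp [hT]
    have hinj : ∀ u, C u + K u = 0 → u = 0 := fun u hu =>
      h u fun v => by rw [haC, hu, inner_zero_left]
    have hsurj : ∀ w, ∃ u, C u + K u = w := by
      rcases hTc.hasEigenvalue_or_mem_resolventSet (μ := (-1 : ℝ)) (by norm_num) with he | hr
      · exfalso
        obtain ⟨x, hx⟩ := he.exists_hasEigenvector
        apply hx.2
        apply hinj
        have h1 : T x = (-1 : ℝ) • x := hx.apply_eq_smul
        rw [← hCT, h1]
        simp
      · intro w
        rw [spectrum.mem_resolventSet_iff] at hr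
        obtain ⟨S, hS⟩ := hr.exists_right_inv
        refine ⟨S (-(C.symm w)), ?_⟩
        have h2 := congrArg (fun L : H →L[ℝ] H => C (L (-(C.symm w)))) hS
        simp [Algebra.algebraMap_eq_smul_one, hCT] at h2
        rw [← neg_eq_iff_eq_neg] at h2
        simp only [map_neg]
        rw [← neg_add]
        exact h2
    intro g
    obtain ⟨u, hu⟩ := hsurj ((InnerProductSpace.toDual ℝ H).symm g)
    refine ⟨u, fun v => by rw [haC, hu, InnerProductSpace.toDual_symm_apply], fun y hy => ?_⟩
    have : y - u = 0 := h _ fun v => by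
      have h1 := hy v
      rw [haC] at h1 ⊢
      rw [map_sub, map_sub, sub_add_sub_comm, inner_sub_left, h1, hu,
        InnerProductSpace.toDual_symm_apply, sub_self]
    exact sub_eq_zero.mp this
  · intro h u hu
    obtain ⟨w, -, hw⟩ := h 0
    rw [hw u (by simpa using hu), hw 0 (fun v => by simp [haC])]
end

section
/- Let H be a real Hilbert space and let a : H × H → ℝ be a bilinear form of the form a(u, v) = c(u, v) + ⟨K u, v⟩, where c is a bounded bilinear form that is coercive (there are M ≥ 0 and α > 0 with |c(u, v)| ≤ M‖u‖‖v‖ and c(v, v) ≥ α‖v‖² for all u, v ∈ H) and K : H →L H is a compact operator. Then the homogeneous problem a(u, v) = 0 for all v ∈ H has only the solution u = 0 if and only if the adjoint homogeneous problem a(v, u) = 0 for all v ∈ H has only the solution u = 0. -/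
open RealInnerProductSpace

/-- One direction of the equivalence. -/
theorem uniqueness_adjoint_aux
    {H : Type*} [NormedAddCommGroup H] [InnerProductSpace ℝ H] [CompleteSpace H]
    (c : H →ₗ[ℝ] H →ₗ[ℝ] ℝ) (K : H →L[ℝ] H)
    (M : ℝ) (hcbound : ∀ u v : H, |c u v| ≤ M * ‖u‖ * ‖v‖)
    (α : ℝ) (hα : 0 < α) (hccoer : ∀ v : H, α * ‖v‖ ^ 2 ≤ c v v)
    (hK : IsCompactOperator K)
    (h : ∀ u : H, (∀ v : H, c u v + ⟪K u, v⟫ = 0) → u = 0)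
    (u : H) (hu : ∀ v : H, c v u + ⟪K v, u⟫ = 0) : u = 0 := by
  let B : H →L[ℝ] H →L[ℝ] ℝ := c.mkContinuous₂ M (fun u v => hcbound u v)
  have hB : IsCoercive B := ⟨α, hα, fun v => by
    have := hccoer v
    simp only [B, LinearMap.mkContinuous₂_apply]
    nlinarith⟩
  let A := hB.continuousLinearEquivOfBilin
  have hA : ∀ x y : H, ⟪A x, y⟫ = c x y := fun x y => by
    simp [A, B]
  let T : H →L[ℝ] H := (A.symm : H →L[ℝ] H) ∘L K
  have hT : IsCompactOperator T := hK.clm_comp (A.symm : H →L[ℝ] H)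
  rcases hT.hasEigenvalue_or_mem_resolventSet (μ := (-1 : ℝ)) (by norm_num) with he | hr
  · obtain ⟨x, hx⟩ := he.exists_hasEigenvector
    exfalso
    apply hx.2
    apply h
    intro v
    have h1 : A.symm (K x) = -x := by simpa [T] using hx.apply_eq_smul
    have h2 : K x = -A x := by
      rw [← map_neg, ← h1, A.apply_symm_apply]
    rw [h2, inner_neg_left, hA]
    ring
  · rw [spectrum.mem_resolventSet_iff, ContinuousLinearMap.isUnit_iff_bijective] at hr
    obtain ⟨v, hv⟩ := hr.2 (-(A.symm u))
    have h1 : v + A.symm (K v) = A.symm u := by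
      have : -v - A.symm (K v) = -(A.symm u) := by
        simpa [T, Algebra.algebraMap_eq_smul_one] using hv
      rw [← neg_inj, ← this]; abel
    have h2 : A v + K v = u := by
      have := congrArg A h1
      simpa using this
    have h3 := hu v
    rw [← hA, ← inner_add_left, h2] at h3
    exact inner_self_eq_zero.1 h3

/-- **Equivalence of the uniqueness assumptions for a problem and its adjoint.**
Let `a(u,v) = c(u,v) + ⟪K u, v⟫` on a real Hilbert space `H`, where `c` is a bounded
coercive bilinear form and `K` is a compact operator.  Then the homogeneous problem
`a(u, ·) = 0` has only the zero solution iff the adjoint homogeneous problem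
`a(·, u) = 0` has only the zero solution. -/
theorem uniqueness_iff_adjoint_uniqueness
    {H : Type*} [NormedAddCommGroup H] [InnerProductSpace ℝ H] [CompleteSpace H]
    (a : H → H → ℝ) (c : H →ₗ[ℝ] H →ₗ[ℝ] ℝ) (K : H →L[ℝ] H)
    (M : ℝ) (hM : 0 ≤ M) (hcbound : ∀ u v : H, |c u v| ≤ M * ‖u‖ * ‖v‖)
    (α : ℝ) (hα : 0 < α) (hccoer : ∀ v : H, α * ‖v‖ ^ 2 ≤ c v v)
    (hK : IsCompactOperator K)
    (ha : ∀ u v : H, a u v = c u v + ⟪K u, v⟫) :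
    (∀ u : H, (∀ v : H, a u v = 0) → u = 0) ↔
      (∀ u : H, (∀ v : H, a v u = 0) → u = 0) := by
  simp only [ha]
  constructor
  · intro h
    exact uniqueness_adjoint_aux c K M hcbound α hα hccoer hK h
  · intro h u hu
    refine uniqueness_adjoint_aux c.flip (ContinuousLinearMap.adjoint K) M
      (fun u v => ?_) α hα (fun v => hccoer v) (isCompactOperator_adjoint_aux K hK)
      (fun w hw => h w fun v => ?_) u (fun v => ?_)
    · rw [LinearMap.flip_apply]
      linarith [hcbound v u]
    · have := hw v
      rwa [LinearMap.flip_apply, ContinuousLinearMap.adjoint_inner_left, real_inner_comm] at this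
    · rw [LinearMap.flip_apply, ContinuousLinearMap.adjoint_inner_left, real_inner_comm]
      exact hu v
end
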